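/- Let 𝒫 be a nonempty admissible and linearly repetitive set of abstract patterns in ℝ^d, and let F : 𝒫_B → ℝ be additive, i.e. both F and −F are subadditive. Then lim_{ω(P)→∞, P∈𝒫_B} F(P)/|P| exists and equals lim_{r→∞} F⁺(r): there is L ∈ ℝ such that for every ε > 0 there is W > 0 with |F(P)/|P| − L| < ε for every P ∈ 𝒫_B with ω(P) ≥ W, and F⁺(r) → L as r → ∞. -/

import Mathlib

open Metric Set Filter MeasureTheory Topology

noncomputable section

/-- Points of `ℝ^d`. -/
abbrev Pt (d : ℕ) := EuclideanSpace ℝ (Fin d)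

variable (d : ℕ)

/-- A tile: a subset of `ℝ^d` homeomorphic to the closed unit ball. -/
def IsTile (m : Set (Pt d)) : Prop :=
  Nonempty (m ≃ₜ (Metric.closedBall (0 : Pt d) 1))

/-- A pattern: a finite nonempty collection of tiles whose interiors are pairwise disjoint. -/
def IsPattern (M : Set (Set (Pt d))) : Prop :=
  M.Finite ∧ M.Nonempty ∧ (∀ m ∈ M, IsTile d m) ∧
    M.Pairwise fun m m' => interior m ∩ interior m' = ∅

/-- A tiling of `ℝ^d`: a collection of tiles with pairwise disjoint interiors covering `ℝ^d`. -/
def IsTiling (T : Set (Set (Pt d))) : Prop :=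
  (∀ m ∈ T, IsTile d m) ∧
    (T.Pairwise fun m m' => interior m ∩ interior m' = ∅) ∧ ⋃₀ T = Set.univ

/-- Translation of a pattern by `t`. -/
def patTrans (t : Pt d) (M : Set (Set (Pt d))) : Set (Set (Pt d)) :=
  (fun m => (fun x => x + t) '' m) '' M

/-- Support (underlying set) of a pattern. -/
def supp (M : Set (Set (Pt d))) : Set (Pt d) := ⋃₀ M

/-- Inner radius: the largest `r` such that some closed ball of radius `r` fits inside `s(M)`. -/
def rIn (M : Set (Set (Pt d))) : ℝ :=
  sSup {r : ℝ | ∃ x : Pt d, Metric.closedBall x r ⊆ supp d M}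

/-- Outer radius: the smallest `r` such that some closed ball of radius `r` contains `s(M)`. -/
def rOut (M : Set (Set (Pt d))) : ℝ :=
  sInf {r : ℝ | ∃ x : Pt d, supp d M ⊆ Metric.closedBall x r}

/-- The pattern class of `P` is a subpattern of (the class of) `Q`:
some translate of `P` is contained in `Q`. -/
def SubpatternClass (P Q : Set (Set (Pt d))) : Prop :=
  ∃ t : Pt d, patTrans d t P ⊆ Q

/-- A set of abstract patterns is modelled as a translation-closed set `Ps` of concrete
patterns (the union of the pattern classes).  `Admissible` encodes conditions
(i)–(iii) of Definition 2.1. -/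
structure Admissible (Ps : Set (Set (Set (Pt d)))) : Prop where
  pattern : ∀ P ∈ Ps, IsPattern d P
  transClosed : ∀ (t : Pt d), ∀ P ∈ Ps, patTrans d t P ∈ Ps
  subClosed : ∀ P ∈ Ps, ∀ Q : Set (Set (Pt d)), IsPattern d Q → Q ⊆ P → Q ∈ Ps
  tileBounds : ∃ rmin rmax : ℝ, 0 < rmin ∧ rmin ≤ rmax ∧
    ∀ m : Set (Pt d), ({m} : Set (Set (Pt d))) ∈ Ps →
      rmin ≤ rIn d {m} ∧ rIn d {m} ≤ rOut d {m} ∧ rOut d {m} ≤ rmax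
  extend : ∀ P ∈ Ps, (0 : Pt d) ∈ supp d P → ∀ r : ℝ, 0 < r →
    ∃ Q ∈ Ps, P ⊆ Q ∧ Metric.closedBall (0 : Pt d) r ⊆ supp d Q

/-- Linear repetitivity of a (translation-closed) set of patterns. -/
def LinearlyRepetitive (Ps : Set (Set (Set (Pt d)))) : Prop :=
  ∃ c : ℝ, 0 < c ∧ ∀ P ∈ Ps, 1 ≤ rOut d P →
    ∀ Q ∈ Ps, c * rOut d P ≤ rIn d Q → SubpatternClass d P Q

/-- The box determined by corner functions `a b : Fin d → ℝ`. -/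
def boxSet (a b : Fin d → ℝ) : Set (Pt d) := {x | ∀ j, x j ∈ Set.Icc (a j) (b j)}

/-- `B` is a box. -/
def IsBox (B : Set (Pt d)) : Prop :=
  ∃ a b : Fin d → ℝ, (∀ j, a j < b j) ∧ B = boxSet d a b

/-- `B` is an `r`-box: all side lengths lie in `[r, 2r]`. -/
def IsRBox (r : ℝ) (B : Set (Pt d)) : Prop :=
  ∃ a b : Fin d → ℝ, (∀ j, a j < b j) ∧ B = boxSet d a b ∧
    ∀ j, r ≤ b j - a j ∧ b j - a j ≤ 2 * r

/-- Width of a box: the minimum of its side lengths. -/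
def widthOf (B : Set (Pt d)) : ℝ :=
  ⨅ j : Fin d, (sSup ((fun x : Pt d => x j) '' B) - sInf ((fun x : Pt d => x j) '' B))

/-- Volume of a subset of `ℝ^d`. -/
def volOf (B : Set (Pt d)) : ℝ := (volume B).toReal

/-- Restriction `M ∩ B` of a pattern or tiling `M` to `B`. -/
def patRestrict (M : Set (Set (Pt d))) (B : Set (Pt d)) : Set (Set (Pt d)) :=
  {s | ∃ m ∈ M, (m ∩ interior B).Nonempty ∧ s = m ∩ B}

/-- The set `Ps_B` of box-patterns derived from `Ps` (concrete representatives). -/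
def BoxPatterns (Ps : Set (Set (Set (Pt d)))) : Set (Set (Set (Pt d))) :=
  {Q | ∃ P ∈ Ps, ∃ B : Set (Pt d), IsBox d B ∧ B ⊆ supp d P ∧ Q = patRestrict d P B}

/-- The set `Ps(r)` of `r`-patterns derived from `Ps`. -/
def RPatterns (Ps : Set (Set (Set (Pt d)))) (r : ℝ) : Set (Set (Set (Pt d))) :=
  {Q | ∃ P ∈ Ps, ∃ B : Set (Pt d), IsRBox d r B ∧ B ⊆ supp d P ∧ Q = patRestrict d P B}

/-- Width of a box-pattern. -/
def patWidth (M : Set (Set (Pt d))) : ℝ := widthOf d (supp d M)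

/-- Volume of a box-pattern. -/
def patVol (M : Set (Set (Pt d))) : ℝ := volOf d (supp d M)

/-- A subadditive function on `Ps_B`, with constants `dF, rF` and error function `cF`.
`F` is defined on concrete patterns and is translation-invariant (i.e. well defined on
pattern classes). -/
structure SubadditiveOn (Ps : Set (Set (Set (Pt d)))) (F : Set (Set (Pt d)) → ℝ)
    (dF rF : ℝ) (cF : ℝ → ℝ) : Prop where
  invariant : ∀ (t : Pt d), ∀ M ∈ BoxPatterns d Ps, F (patTrans d t M) = F M
  dF_nonneg : 0 ≤ dF
  rF_nonneg : 0 ≤ rF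
  cF_anti : ∀ r s : ℝ, rF ≤ r → r ≤ s → cF s ≤ cF r
  cF_lim : Tendsto cF atTop (nhds 0)
  subadd : ∀ M ∈ BoxPatterns d Ps, ∀ (n : ℕ) (Bj : Fin n → Set (Pt d)),
    (∀ j, IsBox d (Bj j)) →
    (∀ i j, i ≠ j → interior (Bj i) ∩ interior (Bj j) = ∅) →
    (⋃ j, Bj j) = supp d M →
    (∀ j, rF ≤ widthOf d (Bj j)) →
    F M ≤ (∑ j, F (patRestrict d M (Bj j))) +
      ∑ j, cF (widthOf d (Bj j)) * volOf d (Bj j)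
  bound : ∀ M ∈ BoxPatterns d Ps, |F M| ≤ dF * patVol d M

/-- The upper mean `F⁺(r)`. -/
def Fplus (Ps : Set (Set (Set (Pt d)))) (F : Set (Set (Pt d)) → ℝ) (r : ℝ) : ℝ :=
  sSup ((fun P => F P / patVol d P) '' RPatterns d Ps r)

/-- The lower mean `F⁻(r)`. -/
def Fminus (Ps : Set (Set (Set (Pt d)))) (F : Set (Set (Pt d)) → ℝ) (r : ℝ) : ℝ :=
  sInf ((fun P => F P / patVol d P) '' RPatterns d Ps r)


section helpers
variable {d}

lemma boxSet_eq_preimage (a b : Fin d → ℝ) :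
    boxSet d a b = (PiLp.homeomorph 2 (fun _ : Fin d => ℝ)) ⁻¹' (Set.univ.pi fun j => Icc (a j) (b j)) := by
  ext x
  simp only [boxSet, Set.mem_preimage, Set.mem_pi, Set.mem_univ, true_imp_iff]
  exact Iff.rfl

lemma boxSet_interior (a b : Fin d → ℝ) :
    interior (boxSet d a b) = {x : Pt d | ∀ j, a j < x j ∧ x j < b j} := by
  rw [boxSet_eq_preimage, ← Homeomorph.preimage_interior, interior_pi_set Set.finite_univ]
  ext x
  simp only [interior_Icc, Set.mem_preimage, Set.mem_pi, Set.mem_univ, true_imp_iff]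
  exact Iff.rfl

lemma boxSet_closed (a b : Fin d → ℝ) : IsClosed (boxSet d a b) := by
  rw [boxSet_eq_preimage]
  exact (isClosed_set_pi fun _ _ => isClosed_Icc).preimage (Homeomorph.continuous _)

lemma boxSet_subset_closure (a b : Fin d → ℝ) (h : ∀ j, a j < b j) :
    boxSet d a b ⊆ closure (interior (boxSet d a b)) := by
  conv_rhs => rw [boxSet_eq_preimage, ← Homeomorph.preimage_interior,
    interior_pi_set Set.finite_univ, ← Homeomorph.preimage_closure, closure_pi_set]
  intro x hx
  simp only [interior_Icc, Set.mem_preimage, Set.mem_pi, Set.mem_univ, true_imp_iff]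
  intro j
  rw [closure_Ioo (h j).ne]
  exact hx j

lemma boxSet_vol (a b : Fin d → ℝ) (h : ∀ j, a j < b j) :
    volOf d (boxSet d a b) = ∏ j, (b j - a j) := by
  have h1 : boxSet d a b = WithLp.ofLp ⁻¹' (Icc a b) := by
    ext x
    simp only [boxSet, Set.mem_ofPred_eq, Set.mem_Icc, Set.mem_preimage, Pi.le_def]
    exact forall_and
  rw [volOf, h1, (PiLp.volume_preserving_ofLp (Fin d)).measure_preimage measurableSet_Icc.nullMeasurableSet,
    Real.volume_Icc_pi_toReal fun j => (h j).le]

lemma boxSet_image (a b : Fin d → ℝ) (h : ∀ j, a j < b j) (j : Fin d) :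
    (fun x : Pt d => x j) '' boxSet d a b = Icc (a j) (b j) := by
  ext y
  constructor
  · rintro ⟨x, hx, rfl⟩
    exact hx j
  · intro hy
    refine ⟨WithLp.toLp 2 (Function.update a j y), ?_, by simp⟩
    intro i
    by_cases hi : i = j
    · subst hi; simpa using hy
    · simp [Function.update_of_ne hi, (h i).le]

lemma le_widthOf [Nonempty (Fin d)] (a b : Fin d → ℝ) (h : ∀ j, a j < b j) (r : ℝ) :
    r ≤ widthOf d (boxSet d a b) ↔ ∀ j, r ≤ b j - a j := by
  unfold widthOf
  rw [le_ciInf_iff (Set.finite_range _).bddBelow]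
  refine forall_congr' fun j => ?_
  rw [boxSet_image a b h, csSup_Icc (h j).le, csInf_Icc (h j).le]

lemma IsTile.isCompact {m : Set (Pt d)} (h : IsTile d m) : IsCompact m := by
  obtain ⟨e⟩ := h
  have : CompactSpace m := by
    have : CompactSpace (Metric.closedBall (0 : Pt d) 1) :=
      isCompact_iff_compactSpace.mp (isCompact_closedBall _ _)
    exact e.symm.compactSpace
  exact isCompact_iff_compactSpace.mpr this

lemma IsTile.nonempty {m : Set (Pt d)} (h : IsTile d m) : m.Nonempty := by
  obtain ⟨e⟩ := h
  exact ⟨_, (e.symm ⟨0, by simp⟩).2⟩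

/-- tiles meeting the interior of B -/
def meet (P : Set (Set (Pt d))) (B : Set (Pt d)) : Set (Set (Pt d)) :=
  {m ∈ P | (m ∩ interior B).Nonempty}

lemma supp_meet {P : Set (Set (Pt d))} (hP : IsPattern d P) (a b : Fin d → ℝ) (h : ∀ j, a j < b j)
    (hB : boxSet d a b ⊆ supp d P) : boxSet d a b ⊆ supp d (meet P (boxSet d a b)) := by
  refine (boxSet_subset_closure a b h).trans (closure_minimal ?_ ?_)
  · intro x hx
    obtain ⟨m, hm, hxm⟩ := hB (interior_subset hx)
    exact ⟨m, ⟨hm, x, hxm, hx⟩, hxm⟩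
  · unfold supp
    rw [Set.sUnion_eq_biUnion]
    exact Set.Finite.isClosed_biUnion (hP.1.subset (Set.sep_subset _ _))
      fun m hm => (hP.2.2.1 m hm.1).isCompact.isClosed

lemma supp_patRestrict {P : Set (Set (Pt d))} (hP : IsPattern d P) (a b : Fin d → ℝ)
    (h : ∀ j, a j < b j) (hB : boxSet d a b ⊆ supp d P) :
    supp d (patRestrict d P (boxSet d a b)) = boxSet d a b := by
  apply Set.Subset.antisymm
  · rintro x ⟨s, ⟨m, hm, _, rfl⟩, hx⟩
    exact hx.2
  · intro x hx
    obtain ⟨m, hm, hxm⟩ := supp_meet hP a b h hB hx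
    exact ⟨m ∩ _, ⟨m, hm.1, hm.2, rfl⟩, hxm, hx⟩

lemma patRestrict_patRestrict (P : Set (Set (Pt d))) {B C : Set (Pt d)} (h : C ⊆ B) :
    patRestrict d (patRestrict d P B) C = patRestrict d P C := by
  ext s
  constructor
  · rintro ⟨_, ⟨m, hm, _, rfl⟩, h2, rfl⟩
    refine ⟨m, hm, h2.mono (by intro x hx; exact ⟨hx.1.1, hx.2⟩), ?_⟩
    rw [Set.inter_assoc, Set.inter_eq_right.mpr h]
  · rintro ⟨m, hm, h2, rfl⟩
    refine ⟨m ∩ B, ⟨m, hm, h2.mono ?_, rfl⟩, h2.mono ?_, ?_⟩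
    · exact fun x hx => ⟨hx.1, interior_mono h hx.2⟩
    · exact fun x hx => ⟨⟨hx.1, h (interior_subset hx.2)⟩, hx.2⟩
    · rw [Set.inter_assoc, Set.inter_eq_right.mpr h]

lemma meet_mem {Ps : Set (Set (Set (Pt d)))} (hadm : Admissible d Ps) {P : Set (Set (Pt d))}
    (hP : P ∈ Ps) (a b : Fin d → ℝ) (h : ∀ j, a j < b j)
    (hB : boxSet d a b ⊆ supp d P) : meet P (boxSet d a b) ∈ Ps := by
  have hp := hadm.pattern P hP
  refine hadm.subClosed P hP _ ⟨hp.1.subset (Set.sep_subset _ _), ?_, fun m hm => hp.2.2.1 m hm.1,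
    hp.2.2.2.mono (Set.sep_subset _ _)⟩ (Set.sep_subset _ _)
  have : (WithLp.toLp 2 a : Pt d) ∈ boxSet d a b := fun j => ⟨le_rfl, (h j).le⟩
  obtain ⟨m, hm, _⟩ := supp_meet hp a b h hB this
  exact ⟨m, hm⟩

lemma singleton_mem {Ps : Set (Set (Set (Pt d)))} (hadm : Admissible d Ps) {P : Set (Set (Pt d))}
    (hP : P ∈ Ps) {m : Set (Pt d)} (hm : m ∈ P) : {m} ∈ Ps := by
  have hp := hadm.pattern P hP
  exact hadm.subClosed P hP _ ⟨Set.finite_singleton _, Set.singleton_nonempty _,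
    fun x hx => by rw [Set.mem_singleton_iff] at hx; exact hx ▸ hp.2.2.1 m hm,
    Set.pairwise_singleton _ _⟩ (Set.singleton_subset_iff.mpr hm)

lemma tile_geom {Ps : Set (Set (Set (Pt d)))} (hadm : Admissible d Ps) :
    ∃ ρ D : ℝ, 0 < ρ ∧ 0 < D ∧ ∀ P ∈ Ps, ∀ m ∈ P, (∃ x, closedBall x ρ ⊆ m) ∧
      ∀ x ∈ m, ∀ y ∈ m, dist x y ≤ D := by
  obtain ⟨rmin, rmax, h0, h1, h2⟩ := hadm.tileBounds
  refine ⟨rmin / 2, 2 * (rmax + 1), by linarith, by linarith, fun P hP m hm => ?_⟩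
  obtain ⟨h3, h4, h5⟩ := h2 m (singleton_mem hadm hP hm)
  have hs : supp d {m} = m := by simp [supp]
  have hc := ((hadm.pattern P hP).2.2.1 m hm).isCompact
  constructor
  · have : rmin / 2 < rIn d {m} := by linarith
    obtain ⟨s, ⟨x, hx⟩, hs'⟩ := exists_lt_of_lt_csSup (by
      exact ⟨-1, 0, by simp⟩) this
    rw [hs] at hx
    exact ⟨x, (closedBall_subset_closedBall hs'.le).trans hx⟩
  · have : rOut d {m} < rmax + 1 := by linarith
    obtain ⟨s, ⟨x, hx⟩, hs'⟩ := exists_lt_of_csInf_lt (by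
      obtain ⟨s, hs'⟩ := hc.isBounded.subset_closedBall 0
      exact ⟨s, 0, hs.symm ▸ hs'⟩) this
    rw [hs] at hx
    intro y hy z hz
    have := dist_triangle_right y z x
    have h6 := hx hy
    have h7 := hx hz
    rw [mem_closedBall] at h6 h7
    linarith

lemma exists_cover {Ps : Set (Set (Set (Pt d)))} (hne : Ps.Nonempty) (hadm : Admissible d Ps)
    (a b : Fin d → ℝ) (_h : ∀ j, a j < b j) : ∃ P ∈ Ps, boxSet d a b ⊆ supp d P := by
  obtain ⟨P, hP⟩ := hne
  have hp := hadm.pattern P hP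
  obtain ⟨m, hm⟩ := hp.2.1
  obtain ⟨x, hx⟩ := (hp.2.2.1 m hm).nonempty
  have hbd : IsCompact (boxSet d a b) := by
    rw [boxSet_eq_preimage]
    exact (Homeomorph.isCompact_preimage _).mpr (isCompact_univ_pi fun _ => isCompact_Icc)
  obtain ⟨s, hs⟩ := hbd.isBounded.subset_closedBall 0
  obtain ⟨Q, hQ, _, h2⟩ := hadm.extend _ (hadm.transClosed (-x) P hP)
    ⟨_, ⟨m, hm, rfl⟩, x, hx, by simp⟩ (max s 1) (by positivity)
  exact ⟨Q, hQ, hs.trans ((closedBall_subset_closedBall (le_max_left _ _)).trans h2)⟩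

/-- saturated patterns for a box -/
structure Sat (Ps : Set (Set (Set (Pt d)))) (P : Set (Set (Pt d))) (B : Set (Pt d)) : Prop where
  mem : P ∈ Ps
  cov : B ⊆ supp d P
  meets : ∀ m ∈ P, (m ∩ interior B).Nonempty
  sat : ∀ Q ∈ Ps, P ⊆ Q → ∀ m ∈ Q, (m ∩ interior B).Nonempty → m ∈ P

lemma boxSet_dist (a b : Fin d → ℝ) (r : ℝ) (hr : 0 ≤ r) (h : ∀ j, b j - a j ≤ r) {x y : Pt d}
    (hx : x ∈ boxSet d a b) (hy : y ∈ boxSet d a b) : dist x y ≤ d * r := by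
  rw [EuclideanSpace.dist_eq]
  apply Real.sqrt_le_iff.mpr
  constructor
  · positivity
  calc ∑ i, dist (x i) (y i) ^ 2 ≤ ∑ i : Fin d, r ^ 2 := by
        refine Finset.sum_le_sum fun i _ => ?_
        have := hx i
        have := hy i
        have := h i
        simp only [Set.mem_Icc] at *
        have : dist (x i) (y i) ≤ r := by
          rw [Real.dist_eq, abs_le]; constructor <;> linarith
        gcongr
    _ = d * r ^ 2 := by simp
    _ ≤ (d * r) ^ 2 := by
        rw [mul_pow]
        gcongr
        have : (d : ℝ) ≤ (d : ℝ) ^ 2 := by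
          have : d ≤ d ^ 2 := Nat.le_self_pow (by norm_num) d
          exact_mod_cast this
        exact this

lemma exists_sat {Ps : Set (Set (Set (Pt d)))} (hne : Ps.Nonempty) (hadm : Admissible d Ps)
    (a b : Fin d → ℝ) (h : ∀ j, a j < b j) : ∃ P, Sat Ps P (boxSet d a b) := by
  classical
  obtain ⟨ρ, D, hρ, hD, hg⟩ := tile_geom hadm
  set B := boxSet d a b with hBdef
  let S : Set (Set (Set (Pt d))) := {Q | Q ∈ Ps ∧ B ⊆ supp d Q ∧ ∀ m ∈ Q, (m ∩ interior B).Nonempty}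
  have hbd : IsCompact B := by
    rw [hBdef, boxSet_eq_preimage]
    exact (Homeomorph.isCompact_preimage _).mpr (isCompact_univ_pi fun _ => isCompact_Icc)
  obtain ⟨s, hs⟩ := hbd.isBounded.subset_closedBall 0
  obtain ⟨t, htf, ht⟩ := Metric.totallyBounded_iff.mp
    (isCompact_closedBall (0 : Pt d) (s + D)).totallyBounded (ρ / 2) (by positivity)
  have hcard : ∀ Q ∈ S, Q.ncard ≤ t.ncard := by
    rintro Q ⟨hQ, _, hQ3⟩
    have hex : ∀ m : Set (Pt d), ∃ y : Pt d, m ∈ Q → y ∈ t ∧ ∃ x, closedBall x ρ ⊆ m ∧ dist x y < ρ / 2 := by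
      intro m
      by_cases hm : m ∈ Q
      · obtain ⟨⟨x, hx⟩, hd⟩ := hg Q hQ m hm
        obtain ⟨z, hz, hzB⟩ := hQ3 m hm
        have h1 : x ∈ closedBall (0 : Pt d) (s + D) := by
          have h2 := hd x (hx (mem_closedBall_self hρ.le)) z hz
          have h3 := hs (interior_subset hzB)
          rw [mem_closedBall] at *
          linarith [dist_triangle x z 0]
        have h4 := ht h1
        simp only [Set.mem_iUnion, mem_ball] at h4
        obtain ⟨y, hy, hxy⟩ := h4
        exact ⟨y, fun _ => ⟨hy, x, hx, hxy⟩⟩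
      · exact ⟨0, fun h => absurd h hm⟩
    choose f hf using hex
    refine Set.ncard_le_ncard_of_injOn f (fun m hm => (hf m hm).1) ?_ htf
    intro m hm m' hm' hff
    by_contra hne'
    obtain ⟨_, x, hx, hxy⟩ := hf m hm
    obtain ⟨_, x', hx', hxy'⟩ := hf m' hm'
    rw [← hff] at hxy'
    have h1 := (hadm.pattern Q hQ).2.2.2 hm hm' hne'
    have h2 : x ∈ interior m := interior_maximal (ball_subset_closedBall.trans hx) isOpen_ball
      (mem_ball_self hρ)
    have h3 : x ∈ interior m' := interior_maximal (ball_subset_closedBall.trans hx') isOpen_ball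
      (by rw [mem_ball]; linarith [dist_triangle_right x x' (f m)])
    have : x ∈ interior m ∩ interior m' := ⟨h2, h3⟩
    rw [h1] at this
    exact this
  obtain ⟨P0, hP0, hP0B⟩ := exists_cover hne hadm a b h
  have hSne : meet P0 B ∈ S := ⟨meet_mem hadm hP0 a b h hP0B,
    supp_meet (hadm.pattern _ hP0) a b h hP0B, fun m hm => hm.2⟩
  have hmem := Nat.sSup_mem (s := Set.ncard '' S) ⟨_, _, hSne, rfl⟩
    ⟨t.ncard, by rintro _ ⟨Q, hQ, rfl⟩; exact hcard Q hQ⟩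
  obtain ⟨P, hP, hPc⟩ := hmem
  refine ⟨P, hP.1, hP.2.1, hP.2.2, fun Q hQ hPQ m hm hmB => ?_⟩
  have hQB : B ⊆ supp d Q := hP.2.1.trans (Set.sUnion_subset_sUnion hPQ)
  have hQS : meet Q B ∈ S := ⟨meet_mem hadm hQ a b h hQB,
    supp_meet (hadm.pattern _ hQ) a b h hQB, fun m hm => hm.2⟩
  have hle : (meet Q B).ncard ≤ P.ncard := by
    rw [hPc]
    exact le_csSup ⟨t.ncard, by rintro _ ⟨Q, hQ, rfl⟩; exact hcard Q hQ⟩ ⟨_, hQS, rfl⟩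
  have hsub : P ⊆ meet Q B := fun m hm => ⟨hPQ hm, hP.2.2 m hm⟩
  have := Set.eq_of_subset_of_ncard_le hsub hle ((hadm.pattern _ hQS.1).1)
  rw [this]
  exact ⟨hm, hmB⟩

lemma patTrans_neg (t : Pt d) (P : Set (Set (Pt d))) : patTrans d t (patTrans d (-t) P) = P := by
  simp only [patTrans, Set.image_image, add_assoc, neg_add_cancel, add_zero,
    Set.image_id']

lemma patTrans_neg' (t : Pt d) (P : Set (Set (Pt d))) : patTrans d (-t) (patTrans d t P) = P := by
  simp only [patTrans, Set.image_image, add_assoc, add_neg_cancel, add_zero,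
    Set.image_id']

lemma patRestrict_trans (t : Pt d) (P : Set (Set (Pt d))) (B : Set (Pt d)) :
    patRestrict d (patTrans d t P) ((fun x => x + t) '' B) = patTrans d t (patRestrict d P B) := by
  have hi : interior ((fun x => x + t) '' B) = (fun x => x + t) '' interior B :=
    ((Homeomorph.addRight t).image_interior B).symm
  have hinj : Function.Injective (fun x : Pt d => x + t) := add_left_injective t
  ext s
  constructor
  · rintro ⟨_, ⟨m, hm, rfl⟩, h2, rfl⟩
    rw [hi, ← Set.image_inter hinj, Set.image_nonempty] at h2
    exact ⟨m ∩ B, ⟨m, hm, h2, rfl⟩, Set.image_inter hinj⟩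
  · rintro ⟨_, ⟨m, hm, h2, rfl⟩, rfl⟩
    refine ⟨_, ⟨m, hm, rfl⟩, ?_, Set.image_inter hinj⟩
    rw [hi, ← Set.image_inter hinj, Set.image_nonempty]
    exact h2

lemma boxSet_trans (t : Pt d) (a b : Fin d → ℝ) :
    (fun x => x + t) '' boxSet d a b = boxSet d (fun j => a j + t j) (fun j => b j + t j) := by
  ext x
  constructor
  · rintro ⟨y, hy, rfl⟩ j
    have := hy j
    simp only [Set.mem_Icc, PiLp.add_apply] at *
    constructor <;> linarith
  · intro hx
    refine ⟨x - t, fun j => ?_, by simp⟩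
    have := hx j
    simp only [Set.mem_Icc, PiLp.sub_apply] at *
    constructor <;> linarith

lemma sat_trans {Ps : Set (Set (Set (Pt d)))} (hadm : Admissible d Ps) {P Q : Set (Set (Pt d))}
    {B : Set (Pt d)} (hS : Sat Ps P B) (hQ : Q ∈ Ps) (t : Pt d) (h : patTrans d t P ⊆ Q) :
    patRestrict d Q ((fun x => x + t) '' B) = patTrans d t (patRestrict d P B) := by
  have h1 : P ⊆ patTrans d (-t) Q := by
    rw [← patTrans_neg' t P]
    exact Set.image_mono h
  have h2 := hadm.transClosed (-t) Q hQ
  conv_lhs => rw [← patTrans_neg t Q]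
  rw [patRestrict_trans]
  congr 1
  ext s
  constructor
  · rintro ⟨m, hm, hB, rfl⟩
    exact ⟨m, hS.sat _ h2 h1 m hm hB, hB, rfl⟩
  · rintro ⟨m, hm, hB, rfl⟩
    exact ⟨m, h1 hm, hB, rfl⟩

lemma le_rIn [Nonempty (Fin d)] {M : Set (Set (Pt d))} (hM : IsPattern d M) (x : Pt d) (s : ℝ)
    (h : closedBall x s ⊆ supp d M) : s ≤ rIn d M := by
  have hb : IsCompact (supp d M) := by
    unfold supp
    exact hM.1.isCompact_sUnion fun m hm => (hM.2.2.1 m hm).isCompact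
  obtain ⟨R, hR⟩ := hb.isBounded.subset_closedBall 0
  refine le_csSup ⟨R, ?_⟩ ⟨x, h⟩
  rintro u ⟨y, hy⟩
  have j : Fin d := Classical.arbitrary _
  by_contra hcon
  push Not at hcon
  by_cases hu : 0 ≤ u
  · have key : ∀ σ : ℝ, |σ| = u → |y j + σ| ≤ R := by
      intro σ hσ
      have h1 : y + EuclideanSpace.single j σ ∈ closedBall y u := by
        simp [mem_closedBall, hσ]
      have h2 := hR (hy h1)
      rw [mem_closedBall_zero_iff] at h2
      have h3 := PiLp.norm_apply_le (y + EuclideanSpace.single j σ) j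
      simp at h3
      linarith
    have k1 := key u (abs_of_nonneg hu)
    have k2 := key (-u) (by rw [abs_neg, abs_of_nonneg hu])
    rw [abs_le] at k1 k2
    linarith
  · -- u negative and R < u: supp nonempty gives R ≥ 0
    obtain ⟨m, hm⟩ := hM.2.1
    obtain ⟨z, hz⟩ := (hM.2.2.1 m hm).nonempty
    have := hR ⟨m, hm, hz⟩
    rw [mem_closedBall_zero_iff] at this
    linarith [norm_nonneg z]

lemma coord_le_dist (x y : Pt d) (j : Fin d) : |x j - y j| ≤ dist x y := by
  rw [dist_eq_norm]
  exact PiLp.norm_apply_le (x - y) j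

lemma place [Nonempty (Fin d)] {Ps : Set (Set (Set (Pt d)))} (hadm : Admissible d Ps)
    (hlr : LinearlyRepetitive d Ps) :
    ∃ K r0 : ℝ, 1 ≤ K ∧ 0 < r0 ∧ ∀ r, r0 ≤ r → ∀ P, Sat Ps P (boxSet d (fun _ => 0) (fun _ => r)) →
      ∀ Q ∈ Ps, ∀ A B : Fin d → ℝ, (∀ j, K * r ≤ B j - A j) → boxSet d A B ⊆ supp d Q →
      ∃ t : Pt d, (∀ j, A j + r ≤ t j ∧ t j + r ≤ B j - r) ∧
        patRestrict d Q (boxSet d (fun j => t j) (fun j => t j + r)) =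
          patTrans d t (patRestrict d P (boxSet d (fun _ => 0) (fun _ => r))) := by
  obtain ⟨c, hc, hlr⟩ := hlr
  obtain ⟨ρ, D, hρ, hD, hg⟩ := tile_geom hadm
  have hdp : (0 : ℝ) ≤ d := Nat.cast_nonneg d
  refine ⟨5 + 2 * c * (d + 1), D + 2, by nlinarith [mul_nonneg hc.le hdp], by linarith, ?_⟩
  intro r hr P hS Q hQ A B hAB hBQ
  have hr0 : 0 < r := by linarith
  have hcd : 0 ≤ c * (d + 1) * r := by positivity
  set B0 := boxSet d (fun _ => 0) (fun _ => r) with hB0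
  -- the outer radius of P
  have hz : (0 : Pt d) ∈ B0 := fun j => ⟨le_rfl, hr0.le⟩
  have hball : supp d P ⊆ closedBall (0 : Pt d) ((d + 1) * r) := by
    rintro x ⟨m, hm, hx⟩
    obtain ⟨z, hzm, hzB⟩ := hS.meets m hm
    have h1 := (hg P hS.mem m hm).2 x hx z hzm
    have h2 := boxSet_dist (fun _ => 0) (fun _ => r) r hr0.le (fun j => by simp)
      (interior_subset hzB) hz
    rw [mem_closedBall]
    have := dist_triangle x z 0
    linarith
  have hO1 : rOut d P ≤ (d + 1) * r := by
    refine csInf_le ⟨0, ?_⟩ ⟨0, hball⟩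
    rintro s ⟨x, hx⟩
    exact nonempty_closedBall.mp ⟨_, hx (hS.cov hz)⟩
  have hO2 : 1 ≤ rOut d P := by
    refine le_csInf ⟨_, 0, hball⟩ ?_
    rintro s ⟨x, hx⟩
    have j : Fin d := Classical.arbitrary _
    have hz' : (WithLp.toLp 2 (fun _ => r) : Pt d) ∈ B0 := fun j => ⟨hr0.le, le_rfl⟩
    have h1 := hx (hS.cov hz)
    have h2 := hx (hS.cov hz')
    rw [mem_closedBall] at h1 h2
    have h3 := coord_le_dist (0 : Pt d) x j
    have h4 := coord_le_dist (WithLp.toLp 2 (fun _ => r) : Pt d) x j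
    rw [abs_le] at h3 h4
    simp only [PiLp.zero_apply] at h3 h4
    linarith
  -- the central part of Q
  let A' : Fin d → ℝ := fun j => A j + 2 * r
  let B' : Fin d → ℝ := fun j => B j - 2 * r
  have hAB' : ∀ j, A' j < B' j := fun j => by
    have := hAB j
    simp only [A', B']
    linarith
  have hsub : boxSet d A' B' ⊆ supp d Q := by
    intro x hx
    refine hBQ fun j => ?_
    have := hx j
    simp only [A', B', Set.mem_Icc] at this
    constructor <;> linarith
  have hQ' := meet_mem hadm hQ A' B' hAB' hsub
  have hcov := supp_meet (hadm.pattern Q hQ) A' B' hAB' hsub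
  have hI : c * ((d + 1) * r) ≤ rIn d (meet Q (boxSet d A' B')) := by
    refine le_rIn (hadm.pattern _ hQ') (WithLp.toLp 2 fun j => (A j + B j) / 2) _ ?_
    intro x hx
    refine hcov fun j => ?_
    rw [mem_closedBall] at hx
    have h1 := coord_le_dist x (WithLp.toLp 2 fun j => (A j + B j) / 2) j
    have h2 := hAB j
    rw [abs_le] at h1
    simp only [A', B', Set.mem_Icc] at *
    constructor <;> linarith
  obtain ⟨t, ht⟩ := hlr P hS.mem hO2 _ hQ' ((mul_le_mul_of_nonneg_left hO1 hc.le).trans hI)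
  have himg : (fun x => x + t) '' B0 = boxSet d (fun j => t j) (fun j => t j + r) := by
    rw [hB0, boxSet_trans]
    congr 1 <;> (funext j; ring)
  refine ⟨t, ?_, ?_⟩
  · have hin : ∀ z ∈ B0, ∀ j, A j + r ≤ z j + t j ∧ z j + t j ≤ B j - r := by
      intro z hz j
      obtain ⟨m, hm, hzm⟩ := hS.cov hz
      obtain ⟨hmQ, w, hwm, hwB⟩ := ht ⟨m, hm, rfl⟩
      have h1 := (hg Q hQ _ hmQ).2 (z + t) ⟨z, hzm, rfl⟩ w hwm
      have h2 := coord_le_dist (z + t) w j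
      have h3 := interior_subset hwB j
      rw [abs_le] at h2
      simp only [A', B', Set.mem_Icc, PiLp.add_apply] at *
      constructor <;> linarith
    intro j
    have h1 := hin 0 hz j
    have h2 := hin (WithLp.toLp 2 (fun _ => r)) (fun j => ⟨hr0.le, le_rfl⟩) j
    simp at h1 h2
    constructor <;> linarith
  · rw [← himg]
    exact sat_trans hadm hS hQ t (ht.trans (Set.sep_subset _ _))

lemma exists_cell (p : ℕ → ℝ) (n : ℕ) (x : ℝ) (hn : 0 < n) (h0 : p 0 ≤ x) (h1 : x ≤ p n) :
    ∃ i : Fin n, p i ≤ x ∧ x ≤ p (i + 1) := by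
  induction n with
  | zero => omega
  | succ n ih =>
    by_cases hx : p n ≤ x
    · exact ⟨⟨n, by omega⟩, hx, h1⟩
    · push Not at hx
      rcases Nat.eq_zero_or_pos n with rfl | hn'
      · exact absurd h0 (not_le.mpr hx)
      · obtain ⟨i, hi⟩ := ih hn' hx.le
        exact ⟨⟨i, by omega⟩, hi⟩

/-- the cell of a grid -/
def cellA (p : Fin d → ℕ → ℝ) (n : Fin d → ℕ) (k : (j : Fin d) → Fin (n j)) : Fin d → ℝ :=
  fun j => p j (k j)
def cellB (p : Fin d → ℕ → ℝ) (n : Fin d → ℕ) (k : (j : Fin d) → Fin (n j)) : Fin d → ℝ :=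
  fun j => p j (k j + 1)

lemma mono_of_steps (p : ℕ → ℝ) (n : ℕ) (hp : ∀ i < n, p i < p (i + 1)) :
    ∀ i j, i ≤ j → j ≤ n → p i ≤ p j := by
  intro i j hij
  induction j, hij using Nat.le_induction with
  | base => intro _; exact le_rfl
  | succ j hij ih => intro hj; exact (ih (by omega)).trans (hp j (by omega)).le

lemma grid_cells [Nonempty (Fin d)] {Ps : Set (Set (Set (Pt d)))} (hadm : Admissible d Ps)
    {F : Set (Set (Pt d)) → ℝ} {dF rF : ℝ} {cF : ℝ → ℝ} (hF : SubadditiveOn d Ps F dF rF cF)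
    (p : Fin d → ℕ → ℝ) (n : Fin d → ℕ) (hn : ∀ j, 0 < n j) (r : ℝ) (hr : rF ≤ r) (hr0 : 0 < r)
    (hp : ∀ j, ∀ i < n j, r ≤ p j (i + 1) - p j i)
    (Q : Set (Set (Pt d))) (hQ : Q ∈ Ps)
    (hB : boxSet d (fun j => p j 0) (fun j => p j (n j)) ⊆ supp d Q) :
    (∀ k, boxSet d (cellA p n k) (cellB p n k) ⊆ supp d Q) ∧
    (∑ k, volOf d (boxSet d (cellA p n k) (cellB p n k)) =
      volOf d (boxSet d (fun j => p j 0) (fun j => p j (n j)))) ∧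
    F (patRestrict d Q (boxSet d (fun j => p j 0) (fun j => p j (n j)))) ≤
      ∑ k, F (patRestrict d Q (boxSet d (cellA p n k) (cellB p n k))) +
      cF r * volOf d (boxSet d (fun j => p j 0) (fun j => p j (n j))) := by
  classical
  set BB := boxSet d (fun j => p j 0) (fun j => p j (n j)) with hBB
  have hlt : ∀ j, ∀ i < n j, p j i < p j (i + 1) := fun j i hi => by linarith [hp j i hi]
  have hmono := fun j => mono_of_steps (p j) (n j) (hlt j)
  have hbig : ∀ j, p j 0 < p j (n j) := fun j =>
    (hlt j 0 (hn j)).trans_le (hmono j 1 (n j) (hn j) le_rfl)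
  have hcell : ∀ k j, cellA p n k j < cellB p n k j := fun k j => hlt j _ (k j).2
  have hsubB : ∀ k, boxSet d (cellA p n k) (cellB p n k) ⊆ BB := by
    intro k x hx j
    have := hx j
    exact ⟨(hmono j 0 _ (Nat.zero_le _) (k j).2.le).trans this.1,
      this.2.trans (hmono j _ _ (k j).2 le_rfl)⟩
  have hvol : ∑ k, volOf d (boxSet d (cellA p n k) (cellB p n k)) = volOf d BB := by
    rw [hBB, boxSet_vol _ _ hbig]
    calc ∑ k, volOf d (boxSet d (cellA p n k) (cellB p n k))
        = ∑ k : (j : Fin d) → Fin (n j), ∏ j, (p j (k j + 1) - p j (k j)) :=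
          Finset.sum_congr rfl fun k _ => boxSet_vol _ _ (hcell k)
      _ = ∏ j, ∑ i : Fin (n j), (p j (i + 1) - p j i) := by
          rw [Finset.prod_univ_sum, Fintype.piFinset_univ]
      _ = _ := by
          refine Finset.prod_congr rfl fun j _ => ?_
          rw [Fin.sum_univ_eq_sum_range (fun i => p j (i + 1) - p j i), Finset.sum_range_sub]
  refine ⟨fun k => (hsubB k).trans hB, hvol, ?_⟩
  let e := Fintype.equivFin ((j : Fin d) → Fin (n j))
  let C : ((j : Fin d) → Fin (n j)) → Set (Pt d) := fun k => boxSet d (cellA p n k) (cellB p n k)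
  have hM : patRestrict d Q BB ∈ BoxPatterns d Ps := ⟨Q, hQ, BB, ⟨_, _, hbig, rfl⟩, hB, rfl⟩
  have hwid : ∀ k, r ≤ widthOf d (C k) := fun k =>
    (le_widthOf _ _ (hcell k) r).mpr fun j => hp j _ (k j).2
  have hdisj : ∀ k k', k ≠ k' → interior (C k) ∩ interior (C k') = ∅ := by
    intro k k' hk
    obtain ⟨j, hj⟩ := Function.ne_iff.mp hk
    apply Set.eq_empty_of_forall_notMem
    rintro x ⟨hx, hx'⟩
    simp only [C] at hx hx'
    rw [boxSet_interior] at hx hx'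
    have h1 := hx j
    have h2 := hx' j
    simp only [cellA, cellB] at h1 h2
    rcases lt_or_gt_of_ne hj with h | h
    · have := hmono j (k j + 1) (k' j) h (k' j).2.le
      linarith
    · have := hmono j (k' j + 1) (k j) h (k j).2.le
      linarith
  have hun : (⋃ i, C (e.symm i)) = supp d (patRestrict d Q BB) := by
    rw [hBB, supp_patRestrict (hadm.pattern Q hQ) _ _ hbig hB, ← hBB]
    apply Set.Subset.antisymm
    · exact Set.iUnion_subset fun i => hsubB _
    · intro x hx
      have := fun j => exists_cell (p j) (n j) (x j) (hn j) (hx j).1 (hx j).2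
      choose k hk using this
      exact Set.mem_iUnion.mpr ⟨e k, by rw [e.symm_apply_apply]; exact hk⟩
  have key := hF.subadd _ hM _ (fun i => C (e.symm i)) (fun i => ⟨_, _, hcell _, rfl⟩)
    (fun i j hij => hdisj _ _ (fun h => hij (e.symm.injective h))) hun
    (fun i => hr.trans (hwid _))
  rw [Equiv.sum_comp e.symm (fun k => F (patRestrict d (patRestrict d Q BB) (C k))),
    Equiv.sum_comp e.symm (fun k => cF (widthOf d (C k)) * volOf d (C k))] at key
  refine key.trans (add_le_add (le_of_eq ?_) ?_)
  · exact Finset.sum_congr rfl fun k _ => by rw [patRestrict_patRestrict Q (hsubB k)]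
  · rw [← hvol, Finset.mul_sum]
    refine Finset.sum_le_sum fun k _ => ?_
    exact mul_le_mul_of_nonneg_right (hF.cF_anti r _ hr (hwid k)) ENNReal.toReal_nonneg

/-- eventual upper bounds for the mean of `F` -/
def UB (Ps : Set (Set (Set (Pt d)))) (F : Set (Set (Pt d)) → ℝ) (v : ℝ) : Prop :=
  ∃ W, ∀ Q ∈ Ps, ∀ A B : Fin d → ℝ, (∀ j, A j < B j) → (∀ j, W ≤ B j - A j) →
    boxSet d A B ⊆ supp d Q → F (patRestrict d Q (boxSet d A B)) ≤ v * volOf d (boxSet d A B)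

lemma vol_pos (A B : Fin d → ℝ) (h : ∀ j, A j < B j) : 0 < volOf d (boxSet d A B) := by
  rw [boxSet_vol A B h]
  exact Finset.prod_pos fun j _ => sub_pos.mpr (h j)

/-- from `R`-boxes to all boxes -/
lemma rbox_to_all [Nonempty (Fin d)] {Ps : Set (Set (Set (Pt d)))} (hadm : Admissible d Ps)
    {F : Set (Set (Pt d)) → ℝ} {dF rF : ℝ} {cF : ℝ → ℝ} (hF : SubadditiveOn d Ps F dF rF cF)
    (R v : ℝ) (hR : rF ≤ R) (hR0 : 0 < R)
    (h : ∀ Q ∈ Ps, ∀ A B : Fin d → ℝ, (∀ j, R ≤ B j - A j ∧ B j - A j ≤ 2 * R) →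
      boxSet d A B ⊆ supp d Q →
      F (patRestrict d Q (boxSet d A B)) ≤ v * volOf d (boxSet d A B)) :
    UB Ps F (v + cF R) := by
  refine ⟨R, fun Q hQ A B hAB hW hB => ?_⟩
  let n : Fin d → ℕ := fun j => ⌊(B j - A j) / R⌋₊
  have hn : ∀ j, 0 < n j := fun j => by
    rw [Nat.floor_pos, le_div_iff₀ hR0]
    linarith [hW j]
  have hnR : ∀ j, (0 : ℝ) < n j := fun j => Nat.cast_pos.mpr (hn j)
  have hn1 : ∀ j, (n j : ℝ) * R ≤ B j - A j := fun j => by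
    rw [← le_div_iff₀ hR0]
    exact Nat.floor_le (div_nonneg (by linarith [hAB j]) hR0.le)
  have hn2 : ∀ j, B j - A j ≤ (n j : ℝ) * (2 * R) := fun j => by
    have h1 : (B j - A j) / R < n j + 1 := Nat.lt_floor_add_one _
    rw [div_lt_iff₀ hR0] at h1
    have h2 : (1 : ℝ) ≤ n j := by exact_mod_cast hn j
    nlinarith
  let p : Fin d → ℕ → ℝ := fun j i => A j + i * ((B j - A j) / n j)
  have hstep : ∀ j i, p j (i + 1) - p j i = (B j - A j) / n j := fun j i => by
    simp only [p]; push_cast; ring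
  have hs1 : ∀ j i, R ≤ p j (i + 1) - p j i := fun j i => by
    rw [hstep, le_div_iff₀ (hnR j)]; linarith [hn1 j]
  have hs2 : ∀ j i, p j (i + 1) - p j i ≤ 2 * R := fun j i => by
    rw [hstep, div_le_iff₀ (hnR j)]; linarith [hn2 j]
  have e0 : (fun j => p j 0) = A := by funext j; simp [p]
  have e1 : (fun j => p j (n j)) = B := by
    funext j
    simp only [p]
    rw [mul_div_cancel₀ _ (hnR j).ne']
    ring
  have hB' := hB
  rw [← e0, ← e1] at hB'
  obtain ⟨g1, g2, g3⟩ := grid_cells hadm hF p n hn R hR hR0 (fun j i _ => hs1 j i) Q hQ hB'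
  rw [e0, e1] at g2 g3
  refine g3.trans ?_
  rw [add_mul]
  gcongr
  rw [← g2, Finset.mul_sum]
  refine Finset.sum_le_sum fun k _ => h Q hQ _ _ (fun j => ⟨hs1 j _, hs2 j _⟩) (g1 k)

lemma core [Nonempty (Fin d)] {Ps : Set (Set (Set (Pt d)))} (hne : Ps.Nonempty)
    (hadm : Admissible d Ps) (hlr : LinearlyRepetitive d Ps)
    {F : Set (Set (Pt d)) → ℝ} {dF rF : ℝ} {cF : ℝ → ℝ} (hF : SubadditiveOn d Ps F dF rF cF) :
    ∃ u : ℝ, (∀ ε > 0, UB Ps F (u + ε)) ∧ ∀ δ > 0, ∃ r1, ∀ r, r1 ≤ r → ∀ P,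
      Sat Ps P (boxSet d (fun _ => 0) (fun _ => r)) →
      (u - δ) * volOf d (boxSet d (fun _ => 0) (fun _ => r)) <
        F (patRestrict d P (boxSet d (fun _ => 0) (fun _ => r))) := by
  have hbound : ∀ Q ∈ Ps, ∀ A B : Fin d → ℝ, (∀ j, A j < B j) → boxSet d A B ⊆ supp d Q →
      |F (patRestrict d Q (boxSet d A B))| ≤ dF * volOf d (boxSet d A B) := by
    intro Q hQ A B hAB hB
    have := hF.bound _ ⟨Q, hQ, _, ⟨A, B, hAB, rfl⟩, hB, rfl⟩
    rwa [patVol, supp_patRestrict (hadm.pattern Q hQ) A B hAB hB] at this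
  have hbb : BddBelow {v | UB Ps F v} := by
    refine ⟨-dF, ?_⟩
    rintro v ⟨W, hW⟩
    have hlt : ∀ _ : Fin d, (0 : ℝ) < max W 1 := fun _ => by positivity
    obtain ⟨Q, hQ, hB⟩ := exists_cover hne hadm (fun _ => 0) (fun _ => max W 1) hlt
    have h1 := hW Q hQ _ _ hlt (fun j => by simp) hB
    have h2 := (abs_le.mp (hbound Q hQ _ _ hlt hB)).1
    have h3 := vol_pos _ _ hlt
    nlinarith
  have hnonempty : {v | UB Ps F v}.Nonempty :=
    ⟨dF, 0, fun Q hQ A B hAB _ hB => (abs_le.mp (hbound Q hQ A B hAB hB)).2⟩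
  refine ⟨sInf {v | UB Ps F v}, ?_, ?_⟩
  · intro ε hε
    obtain ⟨v, ⟨W, hW⟩, hv⟩ := exists_lt_of_csInf_lt hnonempty (lt_add_of_pos_right _ hε)
    refine ⟨W, fun Q hQ A B hAB hw hB => (hW Q hQ A B hAB hw hB).trans ?_⟩
    exact mul_le_mul_of_nonneg_right hv.le (vol_pos A B hAB).le
  set u := sInf {v | UB Ps F v} with hu
  have hup : ∀ ε > 0, UB Ps F (u + ε) := by
    intro ε hε
    obtain ⟨v, ⟨W, hW⟩, hv⟩ := exists_lt_of_csInf_lt hnonempty (lt_add_of_pos_right u hε)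
    refine ⟨W, fun Q hQ A B hAB hw hB => (hW Q hQ A B hAB hw hB).trans ?_⟩
    exact mul_le_mul_of_nonneg_right hv.le (vol_pos A B hAB).le
  intro δ hδ
  obtain ⟨K, r0, hK, hr0, hpl⟩ := place hadm hlr
  set θ : ℝ := ((2 * K) ^ d)⁻¹ with hθ
  have hθ0 : 0 < θ := by positivity
  set η := θ * δ / 6 with hη
  have hη0 : 0 < η := by positivity
  obtain ⟨W, hW⟩ := hup η hη0
  obtain ⟨r2, hr2⟩ := (hF.cF_lim.eventually (gt_mem_nhds hη0)).exists_forall_of_atTop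
  refine ⟨max (max r0 rF) (max W r2), fun r hr P hS => ?_⟩
  simp only [max_le_iff] at hr
  obtain ⟨⟨ha, hb⟩, hc, hd'⟩ := hr
  have hrpos : 0 < r := by linarith
  by_contra hcon
  push Not at hcon
  set V := volOf d (boxSet d (fun _ => 0) (fun _ => r)) with hV
  have hVr : V = r ^ d := by
    rw [hV, boxSet_vol _ _ (fun _ => hrpos)]; simp
  have hKr : r ≤ K * r := by nlinarith
  have hall : UB Ps F ((u + 2 * η - θ * δ) + cF (K * r)) := by
    refine rbox_to_all hadm hF (K * r) _ (hb.trans hKr) (by positivity) ?_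
    intro Q hQ A B hAB hB
    obtain ⟨t, ht1, ht2⟩ := hpl r ha P hS Q hQ A B (fun j => (hAB j).1) hB
    have hABlt : ∀ j, A j < B j := fun j => by linarith [(hAB j).1]
    let p : Fin d → ℕ → ℝ := fun j i =>
      if i = 0 then A j else if i = 1 then t j else if i = 2 then t j + r else B j
    have hp0 : ∀ j, p j 0 = A j := fun j => rfl
    have hp1 : ∀ j, p j 1 = t j := fun j => rfl
    have hp2 : ∀ j, p j 2 = t j + r := fun j => rfl
    have hp3 : ∀ j, p j 3 = B j := fun j => rfl
    have hp : ∀ j, ∀ i < 3, r ≤ p j (i + 1) - p j i := by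
      intro j i hi
      have := ht1 j
      interval_cases i
      · change r ≤ t j - A j; linarith
      · change r ≤ t j + r - t j; linarith
      · change r ≤ B j - (t j + r); linarith
    obtain ⟨g1, g2, g3⟩ := grid_cells hadm hF p (fun _ => 3) (fun _ => by norm_num) r hb hrpos hp Q hQ hB
    change _ = volOf d (boxSet d A B) at g2
    change F (patRestrict d Q (boxSet d A B)) ≤ _ + cF r * volOf d (boxSet d A B) at g3
    let k0 : (j : Fin d) → Fin 3 := fun _ => 1
    have hk0 : boxSet d (cellA p (fun _ => 3) k0) (cellB p (fun _ => 3) k0) =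
        boxSet d (fun j => t j) (fun j => t j + r) := rfl
    have hvk0 : volOf d (boxSet d (fun j => t j) (fun j => t j + r)) = V := by
      rw [boxSet_vol _ _ (fun j => by linarith), hVr]; simp
    have hFk0 : F (patRestrict d Q (boxSet d (fun j => t j) (fun j => t j + r))) =
        F (patRestrict d P (boxSet d (fun _ => 0) (fun _ => r))) := by
      rw [ht2]
      exact hF.invariant t _ ⟨P, hS.mem, _, ⟨_, _, fun _ => hrpos, rfl⟩, hS.cov, rfl⟩
    have hsum : ∑ k, F (patRestrict d Q (boxSet d (cellA p (fun _ => 3) k) (cellB p (fun _ => 3) k))) ≤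
        F (patRestrict d P (boxSet d (fun _ => 0) (fun _ => r))) +
          (u + η) * (volOf d (boxSet d A B) - V) := by
      rw [← g2, ← Finset.add_sum_erase _ _ (Finset.mem_univ k0),
        ← Finset.add_sum_erase Finset.univ (fun k => volOf d _) (Finset.mem_univ k0), hk0, hFk0, hvk0,
        add_sub_cancel_left, Finset.mul_sum]
      gcongr with k hk
      refine hW Q hQ _ _ (fun j => ?_) (fun j => ?_) (g1 k)
      · have := hp j _ (k j).2
        simp only [cellA, cellB]; linarith
      · have := hp j _ (k j).2
        simp only [cellA, cellB]; linarith
    have hQvol : θ * volOf d (boxSet d A B) ≤ V := by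
      rw [hVr, hθ, inv_mul_le_iff₀ (by positivity), boxSet_vol A B hABlt, ← mul_pow]
      calc ∏ j, (B j - A j) ≤ ∏ _j : Fin d, (2 * K * r) :=
            Finset.prod_le_prod (fun j _ => by linarith [hABlt j]) (fun j _ => by linarith [(hAB j).2])
        _ = _ := by simp
    have hQpos := vol_pos A B hABlt
    have hc1 : cF r * volOf d (boxSet d A B) ≤ η * volOf d (boxSet d A B) :=
      mul_le_mul_of_nonneg_right (hr2 r hd').le hQpos.le
    have hVpos : 0 < V := by rw [hVr]; positivity
    have h1 : δ * (θ * volOf d (boxSet d A B)) ≤ δ * V := mul_le_mul_of_nonneg_left hQvol hδ.le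
    have h2 : 0 < η * V := by positivity
    nlinarith
  have h1 : UB Ps F (u - 3 * η) := by
    obtain ⟨W', hW'⟩ := hall
    refine ⟨W', fun Q hQ A B hAB hw hB => (hW' Q hQ A B hAB hw hB).trans ?_⟩
    refine mul_le_mul_of_nonneg_right ?_ (vol_pos A B hAB).le
    have := hr2 (K * r) (hd'.trans hKr)
    have : θ * δ = 6 * η := by rw [hη]; ring
    linarith
  have h2 := csInf_le hbb h1
  linarith

end helpers

/-- Corollary 3.2, additive ergodic theorem.
If both `F` and `-F` are subadditive on the box-patterns of a nonempty admissible
linearly repetitive set of abstract patterns, then `F(P)/|P|` converges (as the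
width `ω(P) → ∞` along `𝒫_B`) to a limit `L`, which equals `lim_{r→∞} F⁺(r)`. -/
theorem additive_ergodic (d : ℕ) (Ps : Set (Set (Set (Pt d))))
    (hne : Ps.Nonempty) (hadm : Admissible d Ps) (hlr : LinearlyRepetitive d Ps)
    (F : Set (Set (Pt d)) → ℝ)
    (hFsub : ∃ (dF rF : ℝ) (cF : ℝ → ℝ), SubadditiveOn d Ps F dF rF cF)
    (hFsup : ∃ (dG rG : ℝ) (cG : ℝ → ℝ), SubadditiveOn d Ps (fun P => -(F P)) dG rG cG) :
    ∃ L : ℝ,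
      Tendsto (Fplus d Ps F) atTop (nhds L) ∧
      ∀ ε : ℝ, 0 < ε → ∃ W : ℝ, 0 < W ∧
        ∀ P ∈ BoxPatterns d Ps, W ≤ patWidth d P →
          |F P / patVol d P - L| < ε := by
  have hd : Nonempty (Fin d) := by
    rcases Nat.eq_zero_or_pos d with rfl | h
    · exfalso
      obtain ⟨P, hP⟩ := hne
      obtain ⟨m, hm⟩ := (hadm.pattern P hP).2.1
      obtain ⟨rmin, rmax, h0, _, h2⟩ := hadm.tileBounds
      have h3 := (h2 m (singleton_mem hadm hP hm)).1
      obtain ⟨x, hx⟩ := ((hadm.pattern P hP).2.2.1 m hm).nonempty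
      have h4 : rIn 0 {m} = 0 := by
        unfold rIn
        have : {r : ℝ | ∃ x : Pt 0, closedBall x r ⊆ supp 0 {m}} = Set.univ := by
          apply Set.eq_univ_of_forall
          intro r
          refine ⟨x, fun y _ => ⟨m, rfl, ?_⟩⟩
          rw [Subsingleton.elim y x]
          exact hx
        rw [this, Real.sSup_univ]
      linarith
    · exact ⟨⟨0, h⟩⟩
  obtain ⟨dF, rF, cF, hF⟩ := hFsub
  obtain ⟨dG, rG, cG, hG⟩ := hFsup
  obtain ⟨u, hu1, hu2⟩ := core hne hadm hlr hF
  obtain ⟨u', hu1', hu2'⟩ := core hne hadm hlr hG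
  have huu : u + u' ≤ 0 := by
    apply le_of_forall_pos_le_add
    intro ε hε
    obtain ⟨r1, h1⟩ := hu2 (ε / 2) (by positivity)
    obtain ⟨r2, h2⟩ := hu2' (ε / 2) (by positivity)
    set r := max (max r1 r2) 1
    have hr : 0 < r := by positivity
    obtain ⟨P, hP⟩ := exists_sat hne hadm (fun _ => 0) (fun _ => r) (fun _ => hr)
    have h3 := h1 r ((le_max_left _ _).trans (le_max_left _ _)) P hP
    have h4 := h2 r ((le_max_right _ _).trans (le_max_left _ _)) P hP
    have h5 := vol_pos (d := d) (fun _ => 0) (fun _ => r) (fun _ => hr)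
    have h6 : (u + u' - ε) * volOf d (boxSet d (fun _ => 0) (fun _ => r)) < 0 := by linarith
    by_contra hcon
    push Not at hcon
    have := mul_nonneg (by linarith : 0 ≤ u + u' - ε) h5.le
    linarith
  have main : ∀ ε : ℝ, 0 < ε → ∃ W : ℝ, 0 < W ∧
        ∀ P ∈ BoxPatterns d Ps, W ≤ patWidth d P →
          |F P / patVol d P - u| < ε := by
    intro ε hε
    obtain ⟨W, hW⟩ := hu1 (ε / 2) (by positivity)
    obtain ⟨W', hW'⟩ := hu1' (ε / 2) (by positivity)
    refine ⟨max (max W W') 1, by positivity, ?_⟩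
    rintro _ ⟨Q, hQ, _, ⟨A, B, hAB, rfl⟩, hB, rfl⟩ hw
    rw [patWidth, supp_patRestrict (hadm.pattern Q hQ) A B hAB hB, le_widthOf A B hAB] at hw
    rw [patVol, supp_patRestrict (hadm.pattern Q hQ) A B hAB hB]
    simp only [max_le_iff] at hw
    have h1 := hW Q hQ A B hAB (fun j => (hw j).1.1) hB
    have h2 := hW' Q hQ A B hAB (fun j => (hw j).1.2) hB
    have h3 := vol_pos A B hAB
    have h4 : F (patRestrict d Q (boxSet d A B)) / volOf d (boxSet d A B) ≤ u + ε / 2 :=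
      (div_le_iff₀ h3).mpr h1
    have h5 : -(u' + ε / 2) ≤ F (patRestrict d Q (boxSet d A B)) / volOf d (boxSet d A B) := by
      rw [le_div_iff₀ h3]; linarith
    rw [abs_lt]
    constructor <;> linarith
  refine ⟨u, ?_, main⟩
  rw [Metric.tendsto_atTop]
  intro ε hε
  obtain ⟨W, hW0, hW⟩ := main (ε / 2) (by positivity)
  refine ⟨W, fun r hr => ?_⟩
  have hr0 : 0 < r := by linarith
  have hall : ∀ y ∈ (fun P => F P / patVol d P) '' RPatterns d Ps r, |y - u| < ε / 2 := by
    rintro _ ⟨_, ⟨Q, hQ, _, ⟨A, B, hAB, rfl, hs⟩, hB, rfl⟩, rfl⟩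
    refine hW _ ⟨Q, hQ, _, ⟨A, B, hAB, rfl⟩, hB, rfl⟩ ?_
    rw [patWidth, supp_patRestrict (hadm.pattern Q hQ) A B hAB hB, le_widthOf A B hAB]
    intro j
    linarith [(hs j).1]
  obtain ⟨Q, hQ, hB⟩ := exists_cover hne hadm (fun _ => 0) (fun _ => r) (fun _ => hr0)
  obtain ⟨y, hy⟩ : ((fun P => F P / patVol d P) '' RPatterns d Ps r).Nonempty :=
    ⟨_, _, ⟨Q, hQ, _, ⟨_, _, fun _ => hr0, rfl, fun j => ⟨by simp, by simp; linarith⟩⟩, hB, rfl⟩, rfl⟩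
  have h1 : Fplus d Ps F r ≤ u + ε / 2 :=
    csSup_le ⟨y, hy⟩ fun z hz => by linarith [(abs_lt.mp (hall z hz)).2]
  have h2 : y ≤ Fplus d Ps F r :=
    le_csSup ⟨u + ε / 2, fun z hz => by linarith [(abs_lt.mp (hall z hz)).2]⟩ hy
  have h3 := (abs_lt.mp (hall y hy)).1
  rw [Real.dist_eq, abs_lt]
  constructor <;> linarith

end
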